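/- Let u be a wellformed sublevel and v₁, …, vₙ wellformed sublevels (n ≥ 0). Then ⟦u⟧σ ≤ max(⟦v₁⟧σ, …, ⟦vₙ⟧σ) holds for every valuation σ (empty maximum being 0) if and only if there exists an index i with u ≤_T vᵢ. -/

import Mathlib

/-- The impredicative maximum on natural numbers. -/
def imaxN : ℕ → ℕ → ℕ
  | _, 0 => 0
  | i, (j+1) => max i (j+1)

/-- Sublevels A(E,x,S) and B(E,S). -/
inductive SubLvl where
  | A : Finset ℕ → ℕ → ℕ → SubLvl
  | B : Finset ℕ → ℕ → SubLvl
deriving DecidableEq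

/-- Value of a sublevel under a valuation. -/
def evalS (σ : ℕ → ℕ) : SubLvl → ℕ
  | .A E x S => if ∃ y ∈ E, σ y = 0 then 0 else σ x + S
  | .B E S => if ∃ y ∈ E, σ y = 0 then 0 else S

/-- Wellformed sublevels. -/
def Wf : SubLvl → Prop
  | .A E x _ => x ∈ E
  | .B _ S => 0 < S

/-- Semantic comparison of sublevels. -/
def leT (u v : SubLvl) : Prop := ∀ σ : ℕ → ℕ, evalS σ u ≤ evalS σ v

/-- Maximum of a list of naturals, 0 for the empty list. -/
def listMax (l : List ℕ) : ℕ := l.foldr max 0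

theorem le_listMax_aux {m : ℕ} (l : List ℕ) (h : m ∈ l) : m ≤ listMax l := by
  induction l with
  | nil => simp at h
  | cons a t ih =>
    simp only [listMax, List.foldr_cons, List.mem_cons] at *
    rcases h with h | h
    · subst h; exact le_max_left _ _
    · exact (ih h).trans (le_max_right _ _)

theorem exists_of_le_listMax_aux {n : ℕ} (hn : 0 < n) (l : List ℕ) (h : n ≤ listMax l) :
    ∃ m ∈ l, n ≤ m := by
  induction l with
  | nil => simp [listMax] at h; omega
  | cons a t ih =>
    simp only [listMax, List.foldr_cons] at *
    rcases le_max_iff.1 h with h | h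
    · exact ⟨a, by simp, h⟩
    · obtain ⟨m, hm, h⟩ := ih h
      exact ⟨m, by simp [hm], h⟩

/-- The constant of a sublevel. -/
def cst : SubLvl → ℕ
  | .A _ _ S => S
  | .B _ S => S

theorem sublevel_le_max_iff (u : SubLvl) (hu : Wf u)
    (vs : List SubLvl) (hvs : ∀ v ∈ vs, Wf v) :
    (∀ σ : ℕ → ℕ, evalS σ u ≤ listMax (vs.map (evalS σ))) ↔
      ∃ v ∈ vs, leT u v := by
  constructor
  · intro h
    cases u with
    | B E S =>
      simp only [Wf] at hu
      have h1 := h (fun y => if y ∈ E then 1 else 0)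
      have e : evalS (fun y => if y ∈ E then 1 else 0) (.B E S) = S := by
        simp [evalS]
      rw [e] at h1
      obtain ⟨m, hm, hle⟩ := exists_of_le_listMax_aux hu _ h1
      obtain ⟨v, hv, rfl⟩ := List.mem_map.1 hm
      refine ⟨v, hv, fun τ => ?_⟩
      have hw := hvs v hv
      clear h h1 e hm hvs
      cases v <;> simp only [evalS, Wf] at * <;> (split_ifs at hle ⊢ <;> first | omega | (simp only [not_exists, not_and] at *; grind))
    | A E x S =>
      simp only [Wf] at hu
      obtain ⟨N, hN⟩ : ∃ N, N = listMax (vs.map cst) + 2 := ⟨_, rfl⟩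
      have h1 := h (fun y => if y = x then N else if y ∈ E then 1 else 0)
      have e : evalS (fun y => if y = x then N else if y ∈ E then 1 else 0) (.A E x S)
          = N + S := by
        simp only [evalS]
        rw [if_neg (by push Not; intro y hy; grind)]
        simp
      rw [e] at h1
      obtain ⟨m, hm, hle⟩ := exists_of_le_listMax_aux (by omega) _ h1
      obtain ⟨v, hv, rfl⟩ := List.mem_map.1 hm
      refine ⟨v, hv, fun τ => ?_⟩
      have hw := hvs v hv
      have hc := le_listMax_aux _ (List.mem_map_of_mem (f := cst) hv)
      clear h h1 e hm hvs
      cases v <;> simp only [evalS, Wf, cst] at * <;> (split_ifs at hle ⊢ <;> first | omega | (simp only [not_exists, not_and] at *; grind))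
  · rintro ⟨v, hv, h⟩ σ
    exact (h σ).trans (le_listMax_aux _ (List.mem_map_of_mem hv))
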